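/- Let d ≥ 1, let K̃ : I^d → ℝ be integrable with ∫_{I^d} K̃ dλ = 1, and for a function g ∈ Γ_{v,I^d} with Borel density ġ define Θ′(g) := ∫_{I^d} ġ K̃ dλ. Then for every v > 0 there exists δ > 0 such that [1−δ, 1+δ] ⊆ Θ′(Γ_{v,I^d}); that is, the image of Γ_{v,I^d} under Θ′ contains a nondegenerate closed interval centered at 1 (indeed Θ′(Γ_{v,I^d}) is an interval containing [ρ^{-1}, ρ] for any ρ > 1 with max(h(ρ), h(ρ^{-1})) ≤ 1/v). -/

import Mathlib

open MeasureTheory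
open scoped ENNReal

/-- The centered unit cube `I^d = [-1/2, 1/2]^d`. -/
def cube (d : ℕ) : Set (Fin d → ℝ) :=
  Set.Icc (fun _ => -(1 / 2 : ℝ)) fun _ => (1 / 2 : ℝ)

/-- `h(x) = x log x - x + 1` for `x > 0`, `h(0) = 1`, `h(x) = ∞` for `x < 0`
(note `Real.log 0 = 0` in Lean, so the formula also gives the value `1` at `0`). -/
noncomputable def hfun (x : ℝ) : ℝ≥0∞ :=
  if x < 0 then ⊤ else ENNReal.ofReal (x * Real.log x - x + 1)

/-- The limit set `Γ_{v,I^d}`: functions `g` on `I^d` with a Borel density `ġ`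
satisfying `∫_{I^d} h(ġ) dλ ≤ 1/v` and `g(s) = ∫_{[s,1/2]} ġ dλ` for all `s ∈ I^d`. -/
def Gam (d : ℕ) (v : ℝ) : Set ((Fin d → ℝ) → ℝ) :=
  {g | ∃ gdot : (Fin d → ℝ) → ℝ, Measurable gdot ∧
      (∫⁻ s in cube d, hfun (gdot s)) ≤ ENNReal.ofReal (1 / v) ∧
      ∀ s ∈ cube d, g s = ∫ u in Set.Icc s (fun _ => (1 / 2 : ℝ)), gdot u}

/-! A constant density `r` costs exactly `h r` on a probability space and is sent to `r` by `Θ'`,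
because the kernel has integral `1`. Hence `Θ'(Γ)` contains the sublevel set `{h ≤ c}` of the
entropy budget `c`. This set is an interval, as `h` is convex, and a neighbourhood of `1`, as `h` is
continuous there with `h 1 = 0`. -/

open Set InformationTheory
open scoped Topology

section RateFunction

lemma hfun_of_neg {x : ℝ} (hx : x < 0) : hfun x = ⊤ := if_pos hx

lemma hfun_of_nonneg {x : ℝ} (hx : 0 ≤ x) : hfun x = ENNReal.ofReal (klFun x) := by
  rw [hfun, if_neg hx.not_gt, klFun_apply, sub_add_eq_add_sub]

lemma hfun_one : hfun 1 = 0 := by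
  rw [hfun_of_nonneg zero_le_one, klFun_one, ENNReal.ofReal_zero]

lemma continuousAt_hfun {x : ℝ} (hx : 0 < x) : ContinuousAt hfun x := by
  have h_klFun : ContinuousAt (fun y ↦ ENNReal.ofReal (klFun y)) x :=
    (ENNReal.continuous_ofReal.comp continuous_klFun).continuousAt
  refine h_klFun.congr ?_
  filter_upwards [lt_mem_nhds hx] with y hy using (hfun_of_nonneg hy.le).symm

lemma hfun_le_max_of_mem_Icc {a b x : ℝ} (hx : x ∈ Icc a b) :
    hfun x ≤ max (hfun a) (hfun b) := by
  obtain ha | ha := lt_or_ge a 0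
  · simp [hfun_of_neg ha]
  · have hx0 : 0 ≤ x := ha.trans hx.1
    have hb : 0 ≤ b := hx0.trans hx.2
    rw [hfun_of_nonneg hx0, hfun_of_nonneg ha, hfun_of_nonneg hb, ← ENNReal.ofReal_max]
    exact ENNReal.ofReal_le_ofReal (convexOn_klFun.le_max_of_mem_Icc ha hb hx)

lemma ordConnected_setOf_hfun_le (c : ℝ≥0∞) : OrdConnected {x | hfun x ≤ c} :=
  ⟨fun _ ha _ hb _ hx ↦ (hfun_le_max_of_mem_Icc hx).trans (max_le ha hb)⟩

lemma setOf_hfun_le_mem_nhds_one {c : ℝ≥0∞} (hc : 0 < c) : {x | hfun x ≤ c} ∈ 𝓝 1 :=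
  (continuousAt_hfun one_pos).preimage_mem_nhds (Iic_mem_nhds (hfun_one.trans_lt hc))

end RateFunction

section ThetaImage

variable {Ω : Type*} [MeasurableSpace Ω]

/-- The image `Θ'(Γ)` for a general base measure `μ`, kernel `K` and entropy budget `c`: the values
`∫ ġ K ∂μ` over the measurable densities `ġ` with `∫ h(ġ) ∂μ ≤ c`. The paper's `Θ'(Γ_{v,I^d})` is
the case of Lebesgue measure on `I^d` and `c = 1/v`. Elements of `Γ` are represented by their
densities, since `Θ'` depends on them only. -/
def thetaImage (μ : Measure Ω) (K : Ω → ℝ) (c : ℝ≥0∞) : Set ℝ :=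
  {r | ∃ gdot : Ω → ℝ, Measurable gdot ∧ (∫⁻ s, hfun (gdot s) ∂μ) ≤ c ∧
    r = ∫ s, gdot s * K s ∂μ}

variable {μ : Measure Ω} [IsProbabilityMeasure μ] {K : Ω → ℝ} {c : ℝ≥0∞}

lemma setOf_hfun_le_subset_thetaImage (hK : ∫ s, K s ∂μ = 1) :
    {r | hfun r ≤ c} ⊆ thetaImage μ K c := by
  intro r hr
  refine ⟨fun _ ↦ r, measurable_const, ?_, ?_⟩
  · rwa [lintegral_const, measure_univ, mul_one]
  · rw [integral_const_mul, hK, mul_one]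

theorem image_Gam_contains_interval_general (hK : ∫ s, K s ∂μ = 1) (hc : 0 < c) :
    (∃ δ > (0 : ℝ), Icc (1 - δ) (1 + δ) ⊆ thetaImage μ K c) ∧
      ∀ a b : ℝ, hfun a ≤ c → hfun b ≤ c → Icc a b ⊆ thetaImage μ K c := by
  have h_sublevel : {r | hfun r ≤ c} ⊆ thetaImage μ K c := setOf_hfun_le_subset_thetaImage hK
  constructor
  · obtain ⟨δ, hδ, h_ball⟩ :=
      Metric.nhds_basis_closedBall.mem_iff.mp (setOf_hfun_le_mem_nhds_one hc)
    rw [Real.closedBall_eq_Icc] at h_ball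
    exact ⟨δ, hδ, h_ball.trans h_sublevel⟩
  · intro a b ha hb
    exact ((ordConnected_setOf_hfun_le c).out ha hb).trans h_sublevel

end ThetaImage

lemma volume_cube (d : ℕ) : volume (cube d) = 1 := by
  rw [cube, Real.volume_Icc_pi]
  norm_num

instance isProbabilityMeasure_restrict_cube (d : ℕ) :
    IsProbabilityMeasure (volume.restrict (cube d)) :=
  isProbabilityMeasure_iff.mpr (by rw [Measure.restrict_apply_univ, volume_cube])

theorem image_Gam_contains_interval {d : ℕ} (hd : 1 ≤ d)
    (K : (Fin d → ℝ) → ℝ)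
    (hK : Integrable K (volume.restrict (cube d)))
    (hK1 : (∫ s in cube d, K s) = 1)
    (v : ℝ) (hv : 0 < v) :
    -- the image of `Γ_{v,I^d}` under `Θ'(g) = ∫_{I^d} ġ K̃ dλ` (each `g ∈ Γ_{v,I^d}`
    -- being represented by a Borel density `ġ`) contains `[1-δ, 1+δ]` for some `δ > 0`
    (∃ δ > (0 : ℝ), Set.Icc (1 - δ) (1 + δ) ⊆
      {r : ℝ | ∃ gdot : (Fin d → ℝ) → ℝ, Measurable gdot ∧
        (∫⁻ s in cube d, hfun (gdot s)) ≤ ENNReal.ofReal (1 / v) ∧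
        r = ∫ s in cube d, gdot s * K s}) ∧
    -- indeed it contains `[ρ⁻¹, ρ]` for any `ρ > 1` with `max (h ρ) (h ρ⁻¹) ≤ 1/v`
    (∀ ρ : ℝ, 1 < ρ → hfun ρ ≤ ENNReal.ofReal (1 / v) →
      hfun ρ⁻¹ ≤ ENNReal.ofReal (1 / v) →
      Set.Icc ρ⁻¹ ρ ⊆
        {r : ℝ | ∃ gdot : (Fin d → ℝ) → ℝ, Measurable gdot ∧
          (∫⁻ s in cube d, hfun (gdot s)) ≤ ENNReal.ofReal (1 / v) ∧
          r = ∫ s in cube d, gdot s * K s}) := by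
  have h := image_Gam_contains_interval_general hK1 (ENNReal.ofReal_pos.mpr (one_div_pos.mpr hv))
  exact ⟨h.1, fun ρ _ hρ hρ_inv ↦ h.2 ρ⁻¹ ρ hρ_inv hρ⟩
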